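/- arXiv:2404.13891 — 4 statements merged into one kernel-verified Lean document; each statement's English description precedes it below -/
import Mathlib

section
/- Fix n ≥ 1, losses ℓ¹, …, ℓᵀ ∈ ℝ^n and positive weights w¹, …, wᵀ. For each η > 0 define recursively: x̃¹_η = 0 ∈ ℝ^n; x^t_η = N(x̃^t_η); r^t_η = ⟨ℓ^t, x^t_η⟩·𝟏 − ℓ^t; and x̃^{t+1}_η = [x̃^t_η + η w^t r^t_η]⁺ (the OMD update with regularizer (1/2)‖·‖₂² on ℝ^n_{≥0} applied to the modified loss −w^t r^t_η). Then for every t ∈ {1, …, T+1} and every η > 0 one has x̃^t_η = η · x̃^t_1 and x^t_η = x^t_1; that is, the produced strategies are independent of the step size η and coincide with the strategies of WCFR+, defined by R⁰ = 0, R^t = [R^{t−1} + w^t r^t]⁺, x^{t+1} = N(R^t). -/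
open Finset
open scoped Classical

/-- Euclidean dot product on `Fin n → ℝ`. -/
def dotp {n : ℕ} (a b : Fin n → ℝ) : ℝ := ∑ i, a i * b i

/-- Componentwise positive part. -/
def clipPos {n : ℕ} (v : Fin n → ℝ) : Fin n → ℝ := fun i => max (v i) 0

/-- Normalization `N(v) = v / ‖v‖₁`, with `N(0)` the uniform distribution. -/
noncomputable def nmz {n : ℕ} (v : Fin n → ℝ) : Fin n → ℝ :=
  if v = 0 then (fun _ => (1 : ℝ) / n) else fun i => v i / ∑ j, |v j|

/-! Normalization is homogeneous of degree `0` and clipping is homogeneous of degree `1` under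
positive scaling. Hence multiplying an iterate by `η` leaves the strategy, and with it the
feedback, unchanged, and turns a step of size `1` into a step of size `η`. Both recursions start
at `0`, so OMD with step size `η` follows the WCFR+ regrets scaled by `η`. -/

theorem clipPos_smul {n : ℕ} {c : ℝ} (hc : 0 ≤ c) (v : Fin n → ℝ) :
    clipPos (c • v) = c • clipPos v := by
  funext i
  simp only [clipPos, Pi.smul_apply, smul_eq_mul, mul_max_of_nonneg _ _ hc, mul_zero]

theorem nmz_smul {n : ℕ} {c : ℝ} (hc : 0 < c) (v : Fin n → ℝ) : nmz (c • v) = nmz v := by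
  rcases eq_or_ne v 0 with rfl | hv
  · rw [smul_zero]
  · have hcv : c • v ≠ 0 := smul_ne_zero hc.ne' hv
    funext i
    simp only [nmz, if_neg hv, if_neg hcv, Pi.smul_apply, smul_eq_mul, abs_mul, abs_of_pos hc,
      ← mul_sum, mul_div_mul_left _ _ hc.ne']

/-- One step of size `η` from the unnormalized iterate `v`: play the strategy `nmz v`, receive
the feedback `g (nmz v)`, and clip. For `g` the weighted regret of a round this is the OMD update;
the WCFR+ update is the case `η = 1`. -/
noncomputable def omdStep {n : ℕ} (η : ℝ) (g : (Fin n → ℝ) → Fin n → ℝ) (v : Fin n → ℝ) :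
    Fin n → ℝ :=
  clipPos (v + η • g (nmz v))

theorem omdStep_smul {n : ℕ} {η : ℝ} (hη : 0 < η) (g : (Fin n → ℝ) → Fin n → ℝ)
    (v : Fin n → ℝ) : omdStep η g (η • v) = η • omdStep 1 g v := by
  simp only [omdStep, nmz_smul hη, one_smul, ← smul_add, clipPos_smul hη.le]

theorem eq_smul_of_omdStep {n T : ℕ} {η : ℝ} (hη : 0 < η)
    {g : ℕ → (Fin n → ℝ) → Fin n → ℝ} {x y : ℕ → Fin n → ℝ} (h_zero : x 0 = η • y 0)
    (hx : ∀ t < T, x (t + 1) = omdStep η (g t) (x t))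
    (hy : ∀ t < T, y (t + 1) = omdStep 1 (g t) (y t)) :
    ∀ t ≤ T, x t = η • y t := by
  intro t ht
  induction t with
  | zero => exact h_zero
  | succ t ih => rw [hx t ht, hy t ht, ih (Nat.le_of_lt ht), omdStep_smul hη]

theorem stmt1_general {n T : ℕ} {F : ℕ → (Fin n → ℝ) → Fin n → ℝ} {w : ℕ → ℝ}
    {xt xs r : ℝ → ℕ → Fin n → ℝ}
    (hxt1 : ∀ η : ℝ, 0 < η → xt η 1 = 0)
    (hxs : ∀ η : ℝ, 0 < η → ∀ t ∈ Icc 1 (T + 1), xs η t = nmz (xt η t))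
    (hr : ∀ η : ℝ, 0 < η → ∀ t ∈ Icc 1 T, r η t = F t (xs η t))
    (hrec : ∀ η : ℝ, 0 < η → ∀ t ∈ Icc 1 T,
      xt η (t + 1) = clipPos (fun i => xt η t i + η * w t * r η t i))
    {R xW rW : ℕ → Fin n → ℝ}
    (hR0 : R 0 = 0)
    (hxW : ∀ t ∈ Icc 1 (T + 1), xW t = nmz (R (t - 1)))
    (hrW : ∀ t ∈ Icc 1 T, rW t = F t (xW t))
    (hRrec : ∀ t ∈ Icc 1 T, R t = clipPos (fun i => R (t - 1) i + w t * rW t i)) :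
    ∀ t ∈ Icc 1 (T + 1), ∀ η : ℝ, 0 < η →
      xt η t = η • xt 1 t ∧ xs η t = xs 1 t ∧ xs η t = xW t := by
  let g (t : ℕ) (x : Fin n → ℝ) : Fin n → ℝ := w (t + 1) • F (t + 1) x
  have round_mem {t : ℕ} (ht : t < T) : t + 1 ∈ Icc 1 T := mem_Icc.mpr ⟨by omega, ht⟩
  have strategy_mem {t : ℕ} (ht : t ≤ T) : t + 1 ∈ Icc 1 (T + 1) :=
    mem_Icc.mpr ⟨by omega, by omega⟩
  have omd_step (η : ℝ) (hη : 0 < η) (t : ℕ) (ht : t < T) :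
      xt η (t + 1 + 1) = omdStep η (g t) (xt η (t + 1)) := by
    rw [hrec η hη _ (round_mem ht), hr η hη _ (round_mem ht), hxs η hη _ (strategy_mem ht.le)]
    simp only [omdStep, g, smul_smul]
    rfl
  have wcfr_step (t : ℕ) (ht : t < T) : R (t + 1) = omdStep 1 (g t) (R t) := by
    rw [hRrec _ (round_mem ht), hrW _ (round_mem ht), hxW _ (strategy_mem ht.le), omdStep, one_smul]
    rfl
  have iterate_eq (η : ℝ) (hη : 0 < η) : ∀ t ≤ T, xt η (t + 1) = η • R t :=
    eq_smul_of_omdStep (x := fun t => xt η (t + 1)) hη (by simp only [hxt1 η hη, hR0, smul_zero])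
      (omd_step η hη) wcfr_step
  have strategy_eq (η : ℝ) (hη : 0 < η) (t : ℕ) (ht : t ≤ T) : xs η (t + 1) = xW (t + 1) := by
    rw [hxs η hη _ (strategy_mem ht), hxW _ (strategy_mem ht), iterate_eq η hη t ht, nmz_smul hη,
      Nat.add_sub_cancel]
  intro t ht η hη
  obtain ⟨t, rfl⟩ := Nat.exists_eq_add_of_le' (mem_Icc.mp ht).1
  have ht : t ≤ T := Nat.le_of_succ_le_succ (mem_Icc.mp ht).2
  refine ⟨?_, ?_, strategy_eq η hη t ht⟩
  · rw [iterate_eq η hη t ht, iterate_eq 1 one_pos t ht, one_smul]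
  · rw [strategy_eq η hη t ht, strategy_eq 1 one_pos t ht]

/-- OMD with regularizer `(1/2)‖·‖₂²` on the nonnegative orthant, fed the weighted
modified losses `−wᵗ rᵗ`, produces strategies independent of the step size `η > 0`,
and these coincide with the strategies of WCFR+. Here `xt η` is the OMD iterate `x̃ᵗ_η`,
`xs η` the normalized strategy `xᵗ_η`, `r η` the instantaneous regret `rᵗ_η`,
and `R`, `xW`, `rW` are the WCFR+ quantities. -/
theorem stmt1 (n T : ℕ) (hn : 0 < n) (hT : 1 ≤ T)
    (ℓ : ℕ → Fin n → ℝ) (w : ℕ → ℝ) (hw : ∀ t ∈ Icc 1 T, 0 < w t)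
    (xt xs r : ℝ → ℕ → Fin n → ℝ)
    (hxt1 : ∀ η : ℝ, 0 < η → xt η 1 = 0)
    (hxs : ∀ η : ℝ, 0 < η → ∀ t ∈ Icc 1 (T + 1), xs η t = nmz (xt η t))
    (hr : ∀ η : ℝ, 0 < η → ∀ t ∈ Icc 1 T,
      r η t = fun i => dotp (ℓ t) (xs η t) - ℓ t i)
    (hrec : ∀ η : ℝ, 0 < η → ∀ t ∈ Icc 1 T,
      xt η (t + 1) = clipPos (fun i => xt η t i + η * w t * r η t i))
    (R xW rW : ℕ → Fin n → ℝ)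
    (hR0 : R 0 = 0)
    (hxW : ∀ t ∈ Icc 1 (T + 1), xW t = nmz (R (t - 1)))
    (hrW : ∀ t ∈ Icc 1 T, rW t = fun i => dotp (ℓ t) (xW t) - ℓ t i)
    (hRrec : ∀ t ∈ Icc 1 T, R t = clipPos (fun i => R (t - 1) i + w t * rW t i)) :
    ∀ t ∈ Icc 1 (T + 1), ∀ η : ℝ, 0 < η →
      xt η t = η • xt 1 t ∧ xs η t = xs 1 t ∧ xs η t = xW t := by
  exact stmt1_general (F := fun t x i => dotp (ℓ t) x - ℓ t i)
    hxt1 hxs hr hrec hR0 hxW hrW hRrec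
end

section
/- Fix n ≥ 1, losses ℓ¹, …, ℓᵀ ∈ ℝ^n and positive weights w¹, …, wᵀ. For each η > 0 define recursively: z⁰_η = 0 ∈ ℝ^n; x¹_η = the uniform distribution; for t ≥ 1, r^t_η = ⟨ℓ^t, x^t_η⟩·𝟏 − ℓ^t; z^t_η = [z^{t−1}_η + η w^t r^t_η]⁺; the prediction v^{t+1}_η = ⟨ℓ^t, x^t_η⟩·𝟏 − ℓ^t; x̃^{t+1}_η = [z^t_η + η w^{t+1} v^{t+1}_η]⁺ (the optimistic OMD update with regularizer (1/2)‖·‖₂² on ℝ^n_{≥0}, modified losses −w^t r^t_η and predictions −w^{t+1} v^{t+1}_η); and x^{t+1}_η = N(x̃^{t+1}_η). Then for every t and every η > 0 one has z^t_η = η · z^t_1, x̃^{t+1}_η = η · x̃^{t+1}_1, and x^{t+1}_η = x^{t+1}_1; that is, the strategies are independent of η and coincide with those of PWCFR+, defined by R⁰ = 0, R^t = [R^{t−1} + w^t r^t]⁺, R̃^{t+1} = [R^t + w^{t+1} v^{t+1}]⁺, x^{t+1} = N(R̃^{t+1}). -/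
open Finset
open scoped Classical

/-!
A step size `η` in the optimistic OMD update only multiplies every weight by `η`, so optimistic OMD
with step size `η` is PWCFR+ run with the weights `η • w`. The positive part is positively
homogeneous and the normalization `N` is invariant under positive scaling, hence multiplying both
the weights and the accumulated regrets of a PWCFR+ run by `η > 0`, while keeping its strategies,
gives another PWCFR+ run. A run is determined by its weights and losses, so this one is the
optimistic OMD run.
-/

variable {n T : ℕ} {ℓ m : ℕ → Fin n → ℝ} {w : ℕ → ℝ} {η : ℝ}

theorem clipPos_smul_s2 (hη : 0 ≤ η) (a : Fin n → ℝ) : clipPos (η • a) = η • clipPos a := by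
  ext i
  simp only [clipPos, Pi.smul_apply, smul_eq_mul, mul_max_of_nonneg _ _ hη, mul_zero]

theorem nmz_smul_s2 (hη : 0 < η) (a : Fin n → ℝ) : nmz (η • a) = nmz a := by
  simp only [nmz, smul_eq_zero_iff_right hη.ne', Pi.smul_apply, smul_eq_mul, abs_mul,
    abs_of_pos hη, ← Finset.mul_sum, mul_div_mul_left _ _ hη.ne']

/-- The instantaneous regret `⟨ℓ, x⟩·𝟏 − ℓ` of the strategy `x` against the loss `ℓ`. Applied to a
predicted loss it gives the prediction of the next regret. -/
def instRegret (ℓ x : Fin n → ℝ) : Fin n → ℝ := fun i => dotp ℓ x - ℓ i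

/-- A run of PWCFR+ over the rounds `1, …, T` with losses `ℓ`, predicted losses `m` and weights `w`:
`R` is the accumulated regret `Rᵗ`, `Rt` the predicted accumulated regret `R̃ᵗ`, `x` the strategy,
`r` the instantaneous regret and `v` its prediction. `Rt` and `v` are only constrained from
round `2` on, since the strategy of round `1` is prescribed. -/
structure IsPWCFRPlus (T : ℕ) (ℓ m : ℕ → Fin n → ℝ) (w : ℕ → ℝ)
    (R Rt x r v : ℕ → Fin n → ℝ) : Prop where
  accum_zero : R 0 = 0
  strategy_one : x 1 = fun _ => (1 : ℝ) / n
  regret_eq : ∀ t ∈ Icc 1 T, r t = instRegret (ℓ t) (x t)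
  accum_eq : ∀ t ∈ Icc 1 T, R t = clipPos (R (t - 1) + w t • r t)
  prediction_eq : ∀ t ∈ Icc 1 T, v (t + 1) = instRegret (m (t + 1)) (x t)
  predictedAccum_eq : ∀ t ∈ Icc 1 T, Rt (t + 1) = clipPos (R t + w (t + 1) • v (t + 1))
  strategy_eq : ∀ t ∈ Icc 1 T, x (t + 1) = nmz (Rt (t + 1))

/-- A run of optimistic OMD with step size `η` and regularizer `(1/2)‖·‖₂²` on the nonnegative
orthant, for the modified losses `−wᵗ rᵗ` and predictions `−wᵗ⁺¹ vᵗ⁺¹`. Its proximal steps are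
the projections `[z + η wᵗ rᵗ]⁺` and `[z + η wᵗ⁺¹ vᵗ⁺¹]⁺`, that is, PWCFR+ steps with
weights `η • w`. -/
abbrev IsOptimisticOMD (T : ℕ) (ℓ m : ℕ → Fin n → ℝ) (w : ℕ → ℝ) (η : ℝ)
    (z xt x r v : ℕ → Fin n → ℝ) : Prop :=
  IsPWCFRPlus T ℓ m (η • w) z xt x r v

namespace IsPWCFRPlus

variable {R Rt x r v R' Rt' x' r' v' : ℕ → Fin n → ℝ}

theorem smul (hη : 0 < η) (h : IsPWCFRPlus T ℓ m w R Rt x r v) :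
    IsPWCFRPlus T ℓ m (η • w) (η • R) (η • Rt) x r v where
  accum_zero := by rw [Pi.smul_apply, h.accum_zero, smul_zero]
  strategy_one := h.strategy_one
  regret_eq := h.regret_eq
  accum_eq t ht := by
    simp only [Pi.smul_apply, h.accum_eq t ht, ← clipPos_smul_s2 hη.le, smul_add, smul_assoc]
  prediction_eq := h.prediction_eq
  predictedAccum_eq t ht := by
    simp only [Pi.smul_apply, h.predictedAccum_eq t ht, ← clipPos_smul_s2 hη.le, smul_add,
      smul_assoc]
  strategy_eq t ht := by rw [h.strategy_eq t ht, Pi.smul_apply, nmz_smul_s2 hη]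

theorem unique_step (h : IsPWCFRPlus T ℓ m w R Rt x r v)
    (h' : IsPWCFRPlus T ℓ m w R' Rt' x' r' v') {t : ℕ} (ht : t ∈ Icc 1 T)
    (hR : R (t - 1) = R' (t - 1)) (hx : x t = x' t) :
    R t = R' t ∧ Rt (t + 1) = Rt' (t + 1) ∧ x (t + 1) = x' (t + 1) := by
  have accum : R t = R' t := by
    rw [h.accum_eq t ht, h'.accum_eq t ht, h.regret_eq t ht, h'.regret_eq t ht, hR, hx]
  have predicted : Rt (t + 1) = Rt' (t + 1) := by
    rw [h.predictedAccum_eq t ht, h'.predictedAccum_eq t ht, h.prediction_eq t ht,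
      h'.prediction_eq t ht, accum, hx]
  exact ⟨accum, predicted, by rw [h.strategy_eq t ht, h'.strategy_eq t ht, predicted]⟩

theorem unique (h : IsPWCFRPlus T ℓ m w R Rt x r v) (h' : IsPWCFRPlus T ℓ m w R' Rt' x' r' v')
    {t : ℕ} (ht : t ∈ Icc 1 T) :
    R t = R' t ∧ Rt (t + 1) = Rt' (t + 1) ∧ x (t + 1) = x' (t + 1) := by
  obtain ⟨one_le, le_T⟩ := mem_Icc.1 ht
  induction t, one_le using Nat.le_induction with
  | base =>
    exact h.unique_step h' ht (h.accum_zero.trans h'.accum_zero.symm)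
      (h.strategy_one.trans h'.strategy_one.symm)
  | succ t one_le ih =>
    have t_le : t ≤ T := t.le_succ.trans le_T
    obtain ⟨accum, -, strategy⟩ := ih (mem_Icc.2 ⟨one_le, t_le⟩) t_le
    exact h.unique_step h' ht accum strategy

end IsPWCFRPlus

theorem IsOptimisticOMD.eq_smul {z xt x r v R Rt xP rP vP : ℕ → Fin n → ℝ} (hη : 0 < η)
    (hz : IsOptimisticOMD T ℓ m w η z xt x r v) (hR : IsPWCFRPlus T ℓ m w R Rt xP rP vP)
    {t : ℕ} (ht : t ∈ Icc 1 T) :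
    z t = η • R t ∧ xt (t + 1) = η • Rt (t + 1) ∧ x (t + 1) = xP (t + 1) :=
  hz.unique (hR.smul hη) ht

theorem stmt2_general {z xt xs r v : ℝ → ℕ → Fin n → ℝ} {R Rt xP rP vP : ℕ → Fin n → ℝ}
    (hz : ∀ η : ℝ, 0 < η → IsOptimisticOMD T ℓ m w η (z η) (xt η) (xs η) (r η) (v η))
    (hR : IsPWCFRPlus T ℓ m w R Rt xP rP vP) :
    ∀ η : ℝ, 0 < η →
      (∀ t ∈ Icc 1 T, z η t = η • z 1 t) ∧
      (∀ t ∈ Icc 1 T,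
        xt η (t + 1) = η • xt 1 (t + 1) ∧
        xs η (t + 1) = xs 1 (t + 1) ∧
        xs η (t + 1) = xP (t + 1)) := by
  intro η hη
  have run_one : IsPWCFRPlus T ℓ m w (z 1) (xt 1) (xs 1) (r 1) (v 1) := by
    simpa only [IsOptimisticOMD, one_smul] using hz 1 one_pos
  have from_one {t : ℕ} (ht : t ∈ Icc 1 T) := (hz η hη).eq_smul hη run_one ht
  exact ⟨fun t ht => (from_one ht).1, fun t ht =>
    ⟨(from_one ht).2.1, (from_one ht).2.2, ((hz η hη).eq_smul hη hR ht).2.2⟩⟩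

/-- Optimistic OMD with regularizer `(1/2)‖·‖₂²` on the nonnegative orthant, fed the
weighted modified losses `−wᵗ rᵗ` and predictions `−wᵗ⁺¹ vᵗ⁺¹` (with predicted loss
`mᵗ⁺¹ = ℓᵗ`), produces strategies independent of the step size `η > 0`, and these
coincide with the strategies of PWCFR+. Here `z η`, `xt η`, `xs η`, `r η`, `v η` are the
optimistic-OMD quantities `zᵗ_η`, `x̃ᵗ_η`, `xᵗ_η`, `rᵗ_η`, `vᵗ_η`, and `R`, `Rt`, `xP`,
`rP`, `vP` are the PWCFR+ quantities. -/
theorem stmt2 (n T : ℕ) (hn : 0 < n) (hT : 1 ≤ T)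
    (ℓ : ℕ → Fin n → ℝ) (w : ℕ → ℝ) (hw : ∀ t ∈ Icc 1 (T + 1), 0 < w t)
    (z xt xs r v : ℝ → ℕ → Fin n → ℝ)
    (hz0 : ∀ η : ℝ, 0 < η → z η 0 = 0)
    (hxs1 : ∀ η : ℝ, 0 < η → xs η 1 = fun _ => (1 : ℝ) / n)
    (hr : ∀ η : ℝ, 0 < η → ∀ t ∈ Icc 1 T,
      r η t = fun i => dotp (ℓ t) (xs η t) - ℓ t i)
    (hzrec : ∀ η : ℝ, 0 < η → ∀ t ∈ Icc 1 T,
      z η t = clipPos (fun i => z η (t - 1) i + η * w t * r η t i))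
    (hv : ∀ η : ℝ, 0 < η → ∀ t ∈ Icc 1 T,
      v η (t + 1) = fun i => dotp (ℓ t) (xs η t) - ℓ t i)
    (hxtrec : ∀ η : ℝ, 0 < η → ∀ t ∈ Icc 1 T,
      xt η (t + 1) = clipPos (fun i => z η t i + η * w (t + 1) * v η (t + 1) i))
    (hxsrec : ∀ η : ℝ, 0 < η → ∀ t ∈ Icc 1 T, xs η (t + 1) = nmz (xt η (t + 1)))
    (R Rt xP rP vP : ℕ → Fin n → ℝ)
    (hR0 : R 0 = 0)
    (hxP1 : xP 1 = fun _ => (1 : ℝ) / n)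
    (hrP : ∀ t ∈ Icc 1 T, rP t = fun i => dotp (ℓ t) (xP t) - ℓ t i)
    (hRrec : ∀ t ∈ Icc 1 T, R t = clipPos (fun i => R (t - 1) i + w t * rP t i))
    (hvP : ∀ t ∈ Icc 1 T, vP (t + 1) = fun i => dotp (ℓ t) (xP t) - ℓ t i)
    (hRt : ∀ t ∈ Icc 1 T,
      Rt (t + 1) = clipPos (fun i => R t i + w (t + 1) * vP (t + 1) i))
    (hxPrec : ∀ t ∈ Icc 1 T, xP (t + 1) = nmz (Rt (t + 1))) :
    ∀ η : ℝ, 0 < η →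
      (∀ t ∈ Icc 1 T, z η t = η • z 1 t) ∧
      (∀ t ∈ Icc 1 T,
        xt η (t + 1) = η • xt 1 (t + 1) ∧
        xs η (t + 1) = xs 1 (t + 1) ∧
        xs η (t + 1) = xP (t + 1)) :=
  stmt2_general (m := fun t => ℓ (t - 1))
    (fun η hη => ⟨hz0 η hη, hxs1 η hη, hr η hη, hzrec η hη, hv η hη, hxtrec η hη, hxsrec η hη⟩)
    ⟨hR0, hxP1, hrP, hRrec, hvP, hRt, hxPrec⟩
end

section
/- Let T ≥ 1, let r¹, …, rᵀ ∈ ℝ^n, let w¹, …, wᵀ > 0 and τ¹, …, τᵀ > 0 be such that the sequence t ↦ τ^t/w^t is non-increasing, and let η > 0. Define x̃¹ = 0 ∈ ℝ^n and x̃^{t+1} = [x̃^t + η w^t r^t]⁺ for 1 ≤ t ≤ T. Then for every x̃′ in the standard simplex Δ^n: Σ_{t=1}^T (τ^t/w^t) ⟨−w^t r^t, x̃^t − x̃′⟩ ≤ (1/(2η))·(τ¹/w¹) + (η/2) Σ_{t=1}^T (τ^t/w^t) ‖w^t r^t‖₂². -/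
open Finset

/-! Since `x̃′ ≥ 0`, clipping does not increase the distance to `x̃′`, so the loss
`⟨-wᵗrᵗ, x̃ᵗ - x̃′⟩` of one step is at most
`(‖x̃ᵗ - x̃′‖² - ‖x̃ᵗ⁺¹ - x̃′‖²) / (2η) + η/2 ‖wᵗrᵗ‖²`. Summed against the non-increasing weights
`τᵗ/wᵗ`, the distances telescope to at most `τ¹/w¹ ‖x̃¹ - x̃′‖²`, and on the simplex `‖x̃′‖ ≤ 1`.
-/

open WithLp (toLp)
open scoped RealInnerProductSpace

theorem sum_Icc_mul_sub_succ_le {R : Type*} [CommRing R] [LinearOrder R] [IsStrictOrderedRing R]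
    {a d : ℕ → R} {m n : ℕ} (hmn : m ≤ n) (ha : AntitoneOn a (Set.Icc m n)) (hd : ∀ t, 0 ≤ d t) :
    ∑ t ∈ Icc m n, a t * (d t - d (t + 1)) ≤ a m * d m - a n * d (n + 1) := by
  induction n, hmn using Nat.le_induction with
  | base => simp [mul_sub]
  | succ n hmn ih =>
    have ih := ih (ha.mono (Set.Icc_subset_Icc_right n.le_succ))
    have hle : a (n + 1) ≤ a n := ha ⟨hmn, n.le_succ⟩ ⟨hmn.trans n.le_succ, le_rfl⟩ n.le_succ
    have := mul_le_mul_of_nonneg_right hle (hd (n + 1))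
    rw [sum_Icc_succ_top (hmn.trans n.le_succ)]
    linarith

section InnerProductSpace

variable {E : Type*} [NormedAddCommGroup E] [InnerProductSpace ℝ E]

theorem inner_neg_sub_le_of_norm_sub_le {x y u g : E} {η : ℝ} (hη : 0 < η)
    (h : ‖y - u‖ ≤ ‖x + η • g - u‖) :
    ⟪-g, x - u⟫ ≤ 1 / (2 * η) * (‖x - u‖ ^ 2 - ‖y - u‖ ^ 2) + η / 2 * ‖g‖ ^ 2 := by
  have expand : ‖x + η • g - u‖ ^ 2 = ‖x - u‖ ^ 2 + 2 * η * ⟪g, x - u⟫ + η ^ 2 * ‖g‖ ^ 2 := by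
    rw [add_sub_right_comm, norm_add_sq_real, inner_smul_right, real_inner_comm, norm_smul,
      Real.norm_eq_abs, mul_pow, sq_abs]
    ring
  calc ⟪-g, x - u⟫
      = 1 / (2 * η) * (‖x - u‖ ^ 2 - ‖x + η • g - u‖ ^ 2) + η / 2 * ‖g‖ ^ 2 := by
        rw [expand, inner_neg_left]
        field_simp
        ring
    _ ≤ 1 / (2 * η) * (‖x - u‖ ^ 2 - ‖y - u‖ ^ 2) + η / 2 * ‖g‖ ^ 2 := by gcongr

theorem sum_mul_inner_neg_sub_le_of_norm_sub_le {T : ℕ} (hT : 1 ≤ T) {a : ℕ → ℝ}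
    (ha : AntitoneOn a (Set.Icc 1 T)) (haT : 0 ≤ a T) {η : ℝ} (hη : 0 < η) {x g : ℕ → E} {u : E}
    (hx : ∀ t ∈ Icc 1 T, ‖x (t + 1) - u‖ ≤ ‖x t + η • g t - u‖) :
    ∑ t ∈ Icc 1 T, a t * ⟪-g t, x t - u⟫ ≤
      1 / (2 * η) * (a 1 * ‖x 1 - u‖ ^ 2) + η / 2 * ∑ t ∈ Icc 1 T, a t * ‖g t‖ ^ 2 := by
  have ha0 : ∀ t ∈ Icc 1 T, 0 ≤ a t := fun t ht ↦
    haT.trans (ha (mem_Icc.1 ht) ⟨hT, le_rfl⟩ (mem_Icc.1 ht).2)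
  have telescope : ∑ t ∈ Icc 1 T, a t * (‖x t - u‖ ^ 2 - ‖x (t + 1) - u‖ ^ 2) ≤
      a 1 * ‖x 1 - u‖ ^ 2 :=
    (sum_Icc_mul_sub_succ_le (d := fun t ↦ ‖x t - u‖ ^ 2) hT ha fun _ ↦ sq_nonneg _).trans
      (sub_le_self _ (mul_nonneg haT (sq_nonneg _)))
  calc ∑ t ∈ Icc 1 T, a t * ⟪-g t, x t - u⟫
      ≤ ∑ t ∈ Icc 1 T, a t * (1 / (2 * η) * (‖x t - u‖ ^ 2 - ‖x (t + 1) - u‖ ^ 2) +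
          η / 2 * ‖g t‖ ^ 2) :=
        sum_le_sum fun t ht ↦ mul_le_mul_of_nonneg_left
          (inner_neg_sub_le_of_norm_sub_le hη (hx t ht)) (ha0 t ht)
    _ = 1 / (2 * η) * ∑ t ∈ Icc 1 T, a t * (‖x t - u‖ ^ 2 - ‖x (t + 1) - u‖ ^ 2) +
          η / 2 * ∑ t ∈ Icc 1 T, a t * ‖g t‖ ^ 2 := by
        simp only [mul_add, sum_add_distrib, mul_sum, mul_left_comm]
    _ ≤ 1 / (2 * η) * (a 1 * ‖x 1 - u‖ ^ 2) + η / 2 * ∑ t ∈ Icc 1 T, a t * ‖g t‖ ^ 2 := by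
        gcongr

end InnerProductSpace

theorem sum_sq_le_one_of_mem_stdSimplex {R ι : Type*} [CommSemiring R] [PartialOrder R]
    [IsOrderedRing R] [Fintype ι] {u : ι → R} (hu : u ∈ stdSimplex R ι) : ∑ i, u i ^ 2 ≤ 1 := by
  simpa only [hu.2, one_pow] using sum_sq_le_sq_sum_of_nonneg (s := univ) fun i _ ↦ hu.1 i

section Orthant

variable {ι : Type*} [Fintype ι]

theorem norm_toLp_posPart_sub_le {u : ι → ℝ} (hu : 0 ≤ u) (v : ι → ℝ) :
    ‖toLp 2 v⁺ - toLp 2 u‖ ≤ ‖toLp 2 v - toLp 2 u‖ := by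
  have coord (i : ι) : |v⁺ i - u i| ≤ |v i - u i| := by
    have hui : max (u i) 0 = u i := max_eq_left (hu i)
    simpa only [hui] using! abs_max_sub_max_le_abs (v i) (u i) 0
  rw [EuclideanSpace.norm_eq, EuclideanSpace.norm_eq]
  exact Real.sqrt_le_sqrt (sum_le_sum fun i _ ↦ pow_le_pow_left₀ (norm_nonneg _) (coord i) 2)

theorem stmt9_general {T : ℕ} (hT : 1 ≤ T) {r : ℕ → ι → ℝ} {w τ : ℕ → ℝ}
    (hw : ∀ t ∈ Icc 1 T, 0 < w t) (hτ : 0 ≤ τ T)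
    (hmono : ∀ t, 1 ≤ t → t < T → τ (t + 1) / w (t + 1) ≤ τ t / w t)
    {η : ℝ} (hη : 0 < η) {x : ℕ → ι → ℝ}
    (hx : ∀ t ∈ Icc 1 T, x (t + 1) = (x t + (η * w t) • r t)⁺) {u : ι → ℝ} (hu : 0 ≤ u) :
    ∑ t ∈ Icc 1 T, (τ t / w t) * (-(w t • r t) ⬝ᵥ (x t - u)) ≤
      1 / (2 * η) * (τ 1 / w 1 * ∑ i, (x 1 i - u i) ^ 2) +
        η / 2 * ∑ t ∈ Icc 1 T, (τ t / w t) * ∑ i, (w t * r t i) ^ 2 := by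
  have last_nonneg : 0 ≤ τ T / w T := div_nonneg hτ (hw T (right_mem_Icc.2 hT)).le
  have anti : AntitoneOn (fun t ↦ τ t / w t) (Set.Icc 1 T) :=
    antitoneOn_of_add_one_le Set.ordConnected_Icc fun t _ ht ht' ↦ hmono t ht.1 ht'.2
  have nonexpansive : ∀ t ∈ Icc 1 T,
      ‖toLp 2 (x (t + 1)) - toLp 2 u‖ ≤ ‖toLp 2 (x t + η • w t • r t) - toLp 2 u‖ :=
    fun t ht ↦ by
      rw [hx t ht, mul_smul]
      exact norm_toLp_posPart_sub_le hu _
  have bound := sum_mul_inner_neg_sub_le_of_norm_sub_le (x := fun t ↦ toLp 2 (x t))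
    (g := fun t ↦ toLp 2 (w t • r t)) (u := toLp 2 u) hT anti last_nonneg hη nonexpansive
  simpa only [EuclideanSpace.real_norm_sq_eq, ← WithLp.toLp_neg, ← WithLp.toLp_sub,
    EuclideanSpace.inner_toLp_toLp, star_trivial, dotProduct_comm, Pi.sub_apply, Pi.smul_apply,
    smul_eq_mul] using bound

end Orthant

/-- The central telescoping weighted regret bound in the proof of Theorem 3:
for the OMD iterates `x̃¹ = 0`, `x̃ᵗ⁺¹ = [x̃ᵗ + η wᵗ rᵗ]⁺` with `τᵗ/wᵗ` non-increasing,
every `x̃′` in the standard simplex satisfies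
`Σ_t (τᵗ/wᵗ)⟨−wᵗrᵗ, x̃ᵗ − x̃′⟩ ≤ (1/(2η))(τ¹/w¹) + (η/2) Σ_t (τᵗ/wᵗ)‖wᵗrᵗ‖₂²`. -/
theorem stmt9 (n T : ℕ) (hT : 1 ≤ T)
    (r : ℕ → Fin n → ℝ) (w τ : ℕ → ℝ)
    (hw : ∀ t ∈ Icc 1 T, 0 < w t) (hτ : ∀ t ∈ Icc 1 T, 0 < τ t)
    (hmono : ∀ t, 1 ≤ t → t < T → τ (t + 1) / w (t + 1) ≤ τ t / w t)
    (η : ℝ) (hη : 0 < η)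
    (xt : ℕ → Fin n → ℝ) (hxt1 : xt 1 = 0)
    (hrec : ∀ t ∈ Icc 1 T, xt (t + 1) = clipPos (fun i => xt t i + η * w t * r t i)) :
    ∀ x' ∈ stdSimplex ℝ (Fin n),
      ∑ t ∈ Icc 1 T, (τ t / w t) * dotp (fun i => -(w t * r t i)) (xt t - x') ≤
        (1 / (2 * η)) * (τ 1 / w 1)
          + (η / 2) * ∑ t ∈ Icc 1 T, (τ t / w t) * ∑ i, (w t * r t i) ^ 2 := by
  intro x' hx'
  have h1 : 1 ∈ Icc 1 T := left_mem_Icc.2 hT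
  have hdist : ∑ i, (xt 1 i - x' i) ^ 2 ≤ 1 := by
    simpa [hxt1] using sum_sq_le_one_of_mem_stdSimplex hx'
  have hinit : τ 1 / w 1 * ∑ i, (xt 1 i - x' i) ^ 2 ≤ τ 1 / w 1 :=
    mul_le_of_le_one_right (div_pos (hτ 1 h1) (hw 1 h1)).le hdist
  -- The two statements match because `clipPos v` and `dotp a b` unfold to `v⁺` and `a ⬝ᵥ b`.
  exact (stmt9_general hT hw (hτ T (right_mem_Icc.2 hT)).le hmono hη hrec hx'.1).trans (by gcongr)
end

section
/- Consider a two-player zero-sum normal-form game with n × m payoff (loss) matrix A, where player 1 plays x ∈ Δ^n to minimize xᵀAy and player 2 plays y ∈ Δ^m to maximize it. Let w¹, …, wᵀ > 0 and τ¹, …, τᵀ > 0 be such that t ↦ τ^t/w^t is non-increasing. Suppose both players run WCFR+ simultaneously: R_x⁰ = 0 ∈ ℝ^n, R_y⁰ = 0 ∈ ℝ^m, and for 1 ≤ t ≤ T: x^t = N(R_x^{t−1}), y^t = N(R_y^{t−1}); ℓ_x^t = A y^t, ℓ_y^t = −Aᵀ x^t; r_x^t = ⟨ℓ_x^t, x^t⟩·𝟏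 − ℓ_x^t, r_y^t = ⟨ℓ_y^t, y^t⟩·𝟏 − ℓ_y^t; R_x^t = [R_x^{t−1} + w^t r_x^t]⁺, R_y^t = [R_y^{t−1} + w^t r_y^t]⁺. Let x̄ = (Σ_t τ^t x^t)/(Σ_t τ^t) and ȳ = (Σ_t τ^t y^t)/(Σ_t τ^t). Then (x̄, ȳ) is an ε-Nash equilibrium with ε = ( √((τ¹/w¹) Σ_t τ^t w^t ‖r_x^t‖₂²) + √((τ¹/w¹) Σ_t τ^t w^t ‖r_y^t‖₂²) ) / (Σ_t τ^t), i.e. x̄ᵀAȳ − min_{x′∈Δ^n} x′ᵀAȳ ≤ ε and max_{y′∈Δ^m} x̄ᵀAy′ − x̄ᵀAȳ ≤ ε. -/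
open Finset Matrix
open scoped Classical

/-!
By Blackwell's condition `⟨Rᵗ⁻¹, rᵗ⟩ = 0` and the nonexpansiveness of the positive part, every
nonnegative `u` satisfies `‖Rᵗ - u‖² ≤ ‖Rᵗ⁻¹ - u‖² + (wᵗ)² ‖rᵗ‖² - 2 wᵗ ⟨rᵗ, u⟩`. Weighting these
inequalities by the non-increasing `τᵗ/wᵗ` and telescoping gives
`2 Σ τᵗ ⟨rᵗ, u⟩ ≤ (τ¹/w¹) ‖u‖² + Σ τᵗ wᵗ ‖rᵗ‖²`. Replacing `u` by `c u` with `c ≥ 0` and optimizing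
over `c` bounds the `τ`-weighted regret of each player. The two weighted regrets add up to
`Σ τᵗ` times the saddle-point gap of the weighted average strategies.
-/

section RealInequalities

theorem sum_mul_sub_add_mul_le {α D : ℕ → ℝ} {T : ℕ} (hT : 1 ≤ T)
    (hα : ∀ t, 1 ≤ t → t < T → α (t + 1) ≤ α t) (hD : ∀ t, 0 ≤ D t) :
    ∑ t ∈ Icc 1 T, α t * (D (t - 1) - D t) + α T * D T ≤ α 1 * D 0 := by
  induction T, hT using Nat.le_induction with
  | base => simp [mul_sub]
  | succ T hT ih =>
    have ih := ih fun t h1 ht => hα t h1 (by lia)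
    have hstep : α (T + 1) * D T ≤ α T * D T :=
      mul_le_mul_of_nonneg_right (hα T hT (by lia)) (hD T)
    rw [sum_Icc_succ_top (by lia), Nat.add_sub_cancel]
    linarith

theorem sq_le_mul_of_forall_two_mul_le {a b X : ℝ} (ha : 0 ≤ a) (hX : 0 ≤ X)
    (h : ∀ c, 0 ≤ c → 2 * (c * X) ≤ a * c ^ 2 + b) : X ^ 2 ≤ a * b := by
  have hb : 0 ≤ b := by simpa using h 0 le_rfl
  have hquad (c : ℝ) : 0 ≤ a * (c * c) + -(2 * X) * c + b := by
    rcases le_total 0 c with hc | hc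
    · linarith [h c hc]
    · have hcX : c * X ≤ 0 := mul_nonpos_of_nonpos_of_nonneg hc hX
      linarith [mul_nonneg ha (mul_self_nonneg c)]
  have hdiscrim := discrim_le_zero hquad
  rw [discrim] at hdiscrim
  linarith

end RealInequalities

section RegretMatchingPlus

variable {ι : Type*} [Fintype ι]

theorem dotProduct_self_posPart_sub_le (v : ι → ℝ) {u : ι → ℝ} (hu : 0 ≤ u) :
    (v⁺ - u) ⬝ᵥ (v⁺ - u) ≤ (v - u) ⬝ᵥ (v - u) := by
  refine sum_le_sum fun i _ => abs_le_iff_mul_self_le.mp ?_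
  have hui : max (u i) 0 = u i := max_eq_left (hu i)
  simpa [posPart_def, hui] using abs_max_sub_max_le_abs (v i) (u i) 0

theorem dotProduct_self_posPart_add_smul_sub_le {v r u : ι → ℝ} (w : ℝ) (hu : 0 ≤ u)
    (hvr : v ⬝ᵥ r = 0) :
    ((v + w • r)⁺ - u) ⬝ᵥ ((v + w • r)⁺ - u) ≤
      (v - u) ⬝ᵥ (v - u) + w ^ 2 * (r ⬝ᵥ r) - 2 * w * (r ⬝ᵥ u) := by
  refine (dotProduct_self_posPart_sub_le _ hu).trans_eq ?_
  simp only [add_dotProduct, dotProduct_add, sub_dotProduct, dotProduct_sub, smul_dotProduct,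
    dotProduct_smul, smul_eq_mul, dotProduct_comm r v, dotProduct_comm u, hvr]
  ring

variable {T : ℕ} {w τ : ℕ → ℝ} {R r : ℕ → ι → ℝ} {u : ι → ℝ}

theorem two_mul_sum_mul_dotProduct_le_of_eq_posPart (hT : 1 ≤ T)
    (hw : ∀ t ∈ Icc 1 T, 0 < w t)
    (hτ : ∀ t ∈ Icc 1 T, 0 ≤ τ t)
    (hmono : ∀ t, 1 ≤ t → t < T → τ (t + 1) / w (t + 1) ≤ τ t / w t) (hR₀ : R 0 = 0)
    (hR : ∀ t ∈ Icc 1 T, R t = (R (t - 1) + w t • r t)⁺)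
    (hRr : ∀ t ∈ Icc 1 T, R (t - 1) ⬝ᵥ r t = 0) (hu : 0 ≤ u) :
    2 * ∑ t ∈ Icc 1 T, τ t * (r t ⬝ᵥ u) ≤
      τ 1 / w 1 * (u ⬝ᵥ u) + ∑ t ∈ Icc 1 T, τ t * w t * (r t ⬝ᵥ r t) := by
  set D : ℕ → ℝ := fun t => (R t - u) ⬝ᵥ (R t - u) with hD
  have hDnonneg (t : ℕ) : 0 ≤ D t := sum_nonneg fun i _ => mul_self_nonneg _
  have hstep (t : ℕ) (ht : t ∈ Icc 1 T) :
      2 * (τ t * (r t ⬝ᵥ u)) - τ t * w t * (r t ⬝ᵥ r t) ≤ τ t / w t * (D (t - 1) - D t) := by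
    have hwt := (hw t ht).ne'
    have hDt : D t ≤ D (t - 1) + w t ^ 2 * (r t ⬝ᵥ r t) - 2 * w t * (r t ⬝ᵥ u) := by
      simpa only [hD, hR t ht] using
        dotProduct_self_posPart_add_smul_sub_le (w t) hu (hRr t ht)
    calc 2 * (τ t * (r t ⬝ᵥ u)) - τ t * w t * (r t ⬝ᵥ r t)
        = τ t / w t * (2 * w t * (r t ⬝ᵥ u) - w t ^ 2 * (r t ⬝ᵥ r t)) := by field_simp
      _ ≤ τ t / w t * (D (t - 1) - D t) :=
        mul_le_mul_of_nonneg_left (by linarith) (div_nonneg (hτ t ht) (hw t ht).le)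
  have htele := sum_mul_sub_add_mul_le (α := fun t => τ t / w t) hT hmono hDnonneg
  have hlast : 0 ≤ τ T / w T * D T :=
    have hTmem := right_mem_Icc.mpr hT
    mul_nonneg (div_nonneg (hτ T hTmem) (hw T hTmem).le) (hDnonneg T)
  have hD₀ : D 0 = u ⬝ᵥ u := by simp [hD, hR₀]
  have hsum := sum_le_sum hstep
  rw [sum_sub_distrib, ← mul_sum] at hsum
  rw [hD₀] at htele
  linarith

theorem sum_mul_dotProduct_le_sqrt_of_eq_posPart (hT : 1 ≤ T) (hw : ∀ t ∈ Icc 1 T, 0 < w t)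
    (hτ : ∀ t ∈ Icc 1 T, 0 ≤ τ t)
    (hmono : ∀ t, 1 ≤ t → t < T → τ (t + 1) / w (t + 1) ≤ τ t / w t) (hR₀ : R 0 = 0)
    (hR : ∀ t ∈ Icc 1 T, R t = (R (t - 1) + w t • r t)⁺)
    (hRr : ∀ t ∈ Icc 1 T, R (t - 1) ⬝ᵥ r t = 0) (hu : 0 ≤ u) :
    ∑ t ∈ Icc 1 T, τ t * (r t ⬝ᵥ u) ≤
      √(τ 1 / w 1 * (u ⬝ᵥ u) * ∑ t ∈ Icc 1 T, τ t * w t * (r t ⬝ᵥ r t)) := by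
  rcases le_total (∑ t ∈ Icc 1 T, τ t * (r t ⬝ᵥ u)) 0 with hneg | hpos
  · exact hneg.trans (Real.sqrt_nonneg _)
  have hmem : 1 ∈ Icc 1 T := left_mem_Icc.mpr hT
  have hcoeff : 0 ≤ τ 1 / w 1 * (u ⬝ᵥ u) :=
    mul_nonneg (div_nonneg (hτ 1 hmem) (hw 1 hmem).le) (sum_nonneg fun i _ => mul_self_nonneg _)
  refine Real.le_sqrt_of_sq_le (sq_le_mul_of_forall_two_mul_le hcoeff hpos fun c hc => ?_)
  have h :=
    two_mul_sum_mul_dotProduct_le_of_eq_posPart hT hw hτ hmono hR₀ hR hRr (smul_nonneg hc hu)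
  simp only [dotProduct_smul, smul_dotProduct, smul_eq_mul, mul_left_comm _ c, ← mul_sum] at h
  linarith

end RegretMatchingPlus

section InstantaneousRegret

variable {ι : Type*} [Fintype ι]

/-- The instantaneous regrets of the strategy `x` against the loss vector `ℓ`: the `i`-th entry is
the loss saved by playing the pure strategy `i` instead of `x`. -/
def instantaneousRegret (ℓ x : ι → ℝ) : ι → ℝ := fun i => ℓ ⬝ᵥ x - ℓ i

theorem instantaneousRegret_dotProduct (ℓ x : ι → ℝ) {u : ι → ℝ} (hu : ∑ i, u i = 1) :
    instantaneousRegret ℓ x ⬝ᵥ u = ℓ ⬝ᵥ (x - u) := by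
  simp [instantaneousRegret, dotProduct, sub_mul, mul_sub, ← mul_sum, hu]

theorem dotProduct_self_le_one_of_mem_stdSimplex {u : ι → ℝ} (hu : u ∈ stdSimplex ℝ ι) :
    u ⬝ᵥ u ≤ 1 := by
  rw [← hu.2]
  exact sum_le_sum fun i _ => mul_le_of_le_one_left (hu.1 i) (mem_Icc_of_mem_stdSimplex hu i).2

end InstantaneousRegret

section Normalization

variable {n : ℕ} {v : Fin n → ℝ}

theorem sum_abs_smul_nmz (v : Fin n → ℝ) : (∑ i, |v i|) • nmz v = v := by
  by_cases hv : v = 0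
  · simp [hv]
  have hnorm : ∑ i, |v i| ≠ 0 := fun h =>
    hv <| funext fun i => abs_eq_zero.mp <|
      (sum_eq_zero_iff_of_nonneg fun j _ => abs_nonneg (v j)).mp h i (mem_univ i)
  ext i
  simp [nmz, hv, mul_div_cancel₀ _ hnorm]

theorem nmz_mem_stdSimplex (hn : 0 < n) (hv : 0 ≤ v) : nmz v ∈ stdSimplex ℝ (Fin n) := by
  by_cases hv₀ : v = 0
  · have hn' : (n : ℝ) ≠ 0 := by positivity
    exact ⟨fun i => by simp [nmz, hv₀], by simp [nmz, hv₀, hn']⟩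
  have hsum : ∑ i, |v i| = ∑ i, v i := sum_congr rfl fun i _ => abs_of_nonneg (hv i)
  have hpos : ∑ i, v i ≠ 0 := fun h => hv₀ ((Fintype.sum_eq_zero_iff_of_nonneg hv).mp h)
  refine ⟨fun i => ?_, ?_⟩
  · simpa [nmz, hv₀] using div_nonneg (hv i) (sum_nonneg fun j _ => abs_nonneg (v j))
  · simp [nmz, hv₀, hsum, ← sum_div, div_self hpos]

theorem dotProduct_instantaneousRegret_nmz (hv : 0 ≤ v) (ℓ : Fin n → ℝ) :
    v ⬝ᵥ instantaneousRegret ℓ (nmz v) = 0 := by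
  by_cases hv₀ : v = 0
  · simp [hv₀]
  obtain ⟨i, -⟩ := Function.ne_iff.mp hv₀
  have horth : instantaneousRegret ℓ (nmz v) ⬝ᵥ nmz v = 0 := by
    simp [instantaneousRegret_dotProduct ℓ _ (nmz_mem_stdSimplex i.pos hv).2]
  calc v ⬝ᵥ instantaneousRegret ℓ (nmz v)
      = ((∑ j, |v j|) • nmz v) ⬝ᵥ instantaneousRegret ℓ (nmz v) := by rw [sum_abs_smul_nmz]
    _ = 0 := by rw [smul_dotProduct, dotProduct_comm, horth, smul_zero]

end Normalization

/-- A run of WCFR+ over the rounds `1, …, T` against the losses `ℓ`, with regret weights `w`: the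
strategies are `x`, their instantaneous regrets `r`, and the clipped cumulative regrets `R`. -/
structure IsWCFRPlus {n : ℕ} (T : ℕ) (w : ℕ → ℝ) (ℓ x r R : ℕ → Fin n → ℝ) : Prop where
  cumulative_zero : R 0 = 0
  strategy_eq : ∀ t ∈ Icc 1 T, x t = nmz (R (t - 1))
  regret_eq : ∀ t ∈ Icc 1 T, r t = instantaneousRegret (ℓ t) (x t)
  cumulative_eq : ∀ t ∈ Icc 1 T, R t = (R (t - 1) + w t • r t)⁺

namespace IsWCFRPlus

variable {n T : ℕ} {w τ : ℕ → ℝ} {ℓ x r R : ℕ → Fin n → ℝ}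

theorem cumulative_nonneg (h : IsWCFRPlus T w ℓ x r R) {t : ℕ} (ht : t ≤ T) : 0 ≤ R t := by
  rcases t.eq_zero_or_pos with rfl | hpos
  · exact h.cumulative_zero.ge
  · rw [h.cumulative_eq t (mem_Icc.mpr ⟨hpos, ht⟩)]
    exact posPart_nonneg _

theorem cumulative_pred_nonneg (h : IsWCFRPlus T w ℓ x r R) {t : ℕ} (ht : t ∈ Icc 1 T) :
    0 ≤ R (t - 1) :=
  h.cumulative_nonneg ((Nat.sub_le t 1).trans (mem_Icc.mp ht).2)

theorem strategy_mem_stdSimplex (h : IsWCFRPlus T w ℓ x r R) (hn : 0 < n) {t : ℕ}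
    (ht : t ∈ Icc 1 T) : x t ∈ stdSimplex ℝ (Fin n) := by
  rw [h.strategy_eq t ht]
  exact nmz_mem_stdSimplex hn (h.cumulative_pred_nonneg ht)

theorem cumulative_dotProduct_regret (h : IsWCFRPlus T w ℓ x r R) {t : ℕ} (ht : t ∈ Icc 1 T) :
    R (t - 1) ⬝ᵥ r t = 0 := by
  rw [h.regret_eq t ht, h.strategy_eq t ht]
  exact dotProduct_instantaneousRegret_nmz (h.cumulative_pred_nonneg ht) _

theorem centerMass_mem_stdSimplex (h : IsWCFRPlus T w ℓ x r R) (hn : 0 < n)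
    (hτ : ∀ t ∈ Icc 1 T, 0 ≤ τ t) (hS : 0 < ∑ t ∈ Icc 1 T, τ t) :
    (Icc 1 T).centerMass τ x ∈ stdSimplex ℝ (Fin n) :=
  (convex_stdSimplex ℝ (Fin n)).centerMass_mem hτ hS fun _ => h.strategy_mem_stdSimplex hn

theorem sum_mul_regret_le_sqrt (h : IsWCFRPlus T w ℓ x r R) (hT : 1 ≤ T)
    (hw : ∀ t ∈ Icc 1 T, 0 < w t) (hτ : ∀ t ∈ Icc 1 T, 0 ≤ τ t)
    (hmono : ∀ t, 1 ≤ t → t < T → τ (t + 1) / w (t + 1) ≤ τ t / w t)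
    {u : Fin n → ℝ} (hu : u ∈ stdSimplex ℝ (Fin n)) :
    ∑ t ∈ Icc 1 T, τ t * (ℓ t ⬝ᵥ (x t - u)) ≤
      √(τ 1 / w 1 * ∑ t ∈ Icc 1 T, τ t * w t * ∑ i, r t i ^ 2) := by
  have hmem : 1 ∈ Icc 1 T := left_mem_Icc.mpr hT
  have hcoeff : 0 ≤ τ 1 / w 1 := div_nonneg (hτ 1 hmem) (hw 1 hmem).le
  have hsum : 0 ≤ ∑ t ∈ Icc 1 T, τ t * w t * ∑ i, r t i ^ 2 :=
    sum_nonneg fun t ht => mul_nonneg (mul_nonneg (hτ t ht) (hw t ht).le)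
      (sum_nonneg fun i _ => sq_nonneg _)
  calc ∑ t ∈ Icc 1 T, τ t * (ℓ t ⬝ᵥ (x t - u))
      = ∑ t ∈ Icc 1 T, τ t * (r t ⬝ᵥ u) := sum_congr rfl fun t ht => by
        rw [h.regret_eq t ht, instantaneousRegret_dotProduct _ _ hu.2]
    _ ≤ √(τ 1 / w 1 * (u ⬝ᵥ u) * ∑ t ∈ Icc 1 T, τ t * w t * ∑ i, r t i ^ 2) := by
        simpa only [dotProduct, ← sq] using sum_mul_dotProduct_le_sqrt_of_eq_posPart hT hw hτ hmono
          h.cumulative_zero h.cumulative_eq (fun _ => h.cumulative_dotProduct_regret) hu.1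
    _ ≤ √(τ 1 / w 1 * ∑ t ∈ Icc 1 T, τ t * w t * ∑ i, r t i ^ 2) := by
        gcongr
        exact mul_le_of_le_one_right hcoeff (dotProduct_self_le_one_of_mem_stdSimplex hu)

end IsWCFRPlus

section SaddlePoint

variable {I ι κ : Type*} [Fintype ι] [Fintype κ] {s : Finset I} {τ : I → ℝ}

theorem sum_mul_saddle_gap_centerMass (hS : ∑ t ∈ s, τ t ≠ 0) (A : Matrix ι κ ℝ) (x : I → ι → ℝ)
    (y : I → κ → ℝ) (x' : ι → ℝ) (y' : κ → ℝ) :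
    (∑ t ∈ s, τ t) * (s.centerMass τ x ⬝ᵥ A *ᵥ y' - x' ⬝ᵥ A *ᵥ s.centerMass τ y) =
      ∑ t ∈ s, τ t * ((A *ᵥ y t) ⬝ᵥ (x t - x')) +
        ∑ t ∈ s, τ t * (-(Aᵀ *ᵥ x t) ⬝ᵥ (y t - y')) := by
  have hround (t : I) : τ t * ((A *ᵥ y t) ⬝ᵥ (x t - x')) + τ t * (-(Aᵀ *ᵥ x t) ⬝ᵥ (y t - y')) =
      τ t * (x t ⬝ᵥ A *ᵥ y') - τ t * (x' ⬝ᵥ A *ᵥ y t) := by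
    simp only [mulVec_transpose, neg_dotProduct, ← dotProduct_mulVec, dotProduct_sub,
      dotProduct_comm (A *ᵥ y t), sub_dotProduct]
    ring
  have hx : (∑ t ∈ s, τ t) * (s.centerMass τ x ⬝ᵥ A *ᵥ y') =
      ∑ t ∈ s, τ t * (x t ⬝ᵥ A *ᵥ y') := by
    simp [centerMass, smul_dotProduct, sum_dotProduct, mul_inv_cancel_left₀ hS]
  have hy : (∑ t ∈ s, τ t) * (x' ⬝ᵥ A *ᵥ s.centerMass τ y) =
      ∑ t ∈ s, τ t * (x' ⬝ᵥ A *ᵥ y t) := by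
    simp [centerMass, mulVec_smul, mulVec_sum, dotProduct_sum, mul_inv_cancel_left₀ hS]
  rw [mul_sub, hx, hy, ← sum_add_distrib, ← sum_sub_distrib]
  exact sum_congr rfl fun t _ => (hround t).symm

theorem saddle_gap_centerMass_le (hS : 0 < ∑ t ∈ s, τ t) {A : Matrix ι κ ℝ} {x : I → ι → ℝ}
    {y : I → κ → ℝ} {x' : ι → ℝ} {y' : κ → ℝ} {εx εy : ℝ}
    (hx : ∑ t ∈ s, τ t * ((A *ᵥ y t) ⬝ᵥ (x t - x')) ≤ εx)
    (hy : ∑ t ∈ s, τ t * (-(Aᵀ *ᵥ x t) ⬝ᵥ (y t - y')) ≤ εy) :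
    s.centerMass τ x ⬝ᵥ A *ᵥ y' - x' ⬝ᵥ A *ᵥ s.centerMass τ y ≤ (εx + εy) / ∑ t ∈ s, τ t := by
  rw [le_div_iff₀' hS, sum_mul_saddle_gap_centerMass hS.ne']
  exact add_le_add hx hy

end SaddlePoint

/-- Theorem 3 of the paper instantiated on a two-player zero-sum normal-form game with
loss matrix `A`: if both players run WCFR+ with weights `w` for regrets and `τ` for
average strategies (`τᵗ/wᵗ` non-increasing), the `τ`-weighted average strategy profile
`(x̄, ȳ)` is an `ε`-Nash equilibrium with
`ε = (√((τ¹/w¹)Σ τᵗwᵗ‖r_xᵗ‖₂²) + √((τ¹/w¹)Σ τᵗwᵗ‖r_yᵗ‖₂²))/(Σ τᵗ)`. -/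
theorem stmt13 (n m T : ℕ) (hn : 0 < n) (hm : 0 < m) (hT : 1 ≤ T)
    (A : Matrix (Fin n) (Fin m) ℝ)
    (w τ : ℕ → ℝ)
    (hw : ∀ t ∈ Icc 1 T, 0 < w t) (hτ : ∀ t ∈ Icc 1 T, 0 < τ t)
    (hmono : ∀ t, 1 ≤ t → t < T → τ (t + 1) / w (t + 1) ≤ τ t / w t)
    (Rx : ℕ → Fin n → ℝ) (Ry : ℕ → Fin m → ℝ)
    (x rx : ℕ → Fin n → ℝ) (y ry : ℕ → Fin m → ℝ)
    (ℓx : ℕ → Fin n → ℝ) (ℓy : ℕ → Fin m → ℝ)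
    (hRx0 : Rx 0 = 0) (hRy0 : Ry 0 = 0)
    (hx : ∀ t ∈ Icc 1 T, x t = nmz (Rx (t - 1)))
    (hy : ∀ t ∈ Icc 1 T, y t = nmz (Ry (t - 1)))
    (hℓx : ∀ t ∈ Icc 1 T, ℓx t = A.mulVec (y t))
    (hℓy : ∀ t ∈ Icc 1 T, ℓy t = -(Aᵀ.mulVec (x t)))
    (hrx : ∀ t ∈ Icc 1 T, rx t = fun i => dotp (ℓx t) (x t) - ℓx t i)
    (hry : ∀ t ∈ Icc 1 T, ry t = fun j => dotp (ℓy t) (y t) - ℓy t j)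
    (hRx : ∀ t ∈ Icc 1 T, Rx t = clipPos (fun i => Rx (t - 1) i + w t * rx t i))
    (hRy : ∀ t ∈ Icc 1 T, Ry t = clipPos (fun j => Ry (t - 1) j + w t * ry t j)) :
    let S : ℝ := ∑ t ∈ Icc 1 T, τ t
    let xbar : Fin n → ℝ := S⁻¹ • ∑ t ∈ Icc 1 T, τ t • x t
    let ybar : Fin m → ℝ := S⁻¹ • ∑ t ∈ Icc 1 T, τ t • y t
    let ε : ℝ :=
      (Real.sqrt ((τ 1 / w 1) * ∑ t ∈ Icc 1 T, τ t * w t * ∑ i, (rx t i) ^ 2)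
        + Real.sqrt ((τ 1 / w 1) * ∑ t ∈ Icc 1 T, τ t * w t * ∑ j, (ry t j) ^ 2)) / S
    (∀ x' ∈ stdSimplex ℝ (Fin n),
      dotp xbar (A.mulVec ybar) - dotp x' (A.mulVec ybar) ≤ ε) ∧
    (∀ y' ∈ stdSimplex ℝ (Fin m),
      dotp xbar (A.mulVec y') - dotp xbar (A.mulVec ybar) ≤ ε) := by
  intro S xbar ybar ε
  -- `dotp`, `clipPos` and `xbar`, `ybar` are definitionally `⬝ᵥ`, `⁺` and `Finset.centerMass`.
  have hX : IsWCFRPlus T w (fun t => A *ᵥ y t) x rx Rx :=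
    ⟨hRx0, hx, fun t ht => hℓx t ht ▸ hrx t ht, hRx⟩
  have hY : IsWCFRPlus T w (fun t => -(Aᵀ *ᵥ x t)) y ry Ry :=
    ⟨hRy0, hy, fun t ht => hℓy t ht ▸ hry t ht, hRy⟩
  have hτ' (t : ℕ) (ht : t ∈ Icc 1 T) : 0 ≤ τ t := (hτ t ht).le
  have hS : 0 < S := sum_pos hτ (nonempty_Icc.mpr hT)
  have hgap : ∀ x' ∈ stdSimplex ℝ (Fin n), ∀ y' ∈ stdSimplex ℝ (Fin m),
      dotp xbar (A *ᵥ y') - dotp x' (A *ᵥ ybar) ≤ ε := fun x' hx' y' hy' =>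
    saddle_gap_centerMass_le hS (hX.sum_mul_regret_le_sqrt hT hw hτ' hmono hx')
      (hY.sum_mul_regret_le_sqrt hT hw hτ' hmono hy')
  exact ⟨fun x' hx' => hgap x' hx' ybar (hY.centerMass_mem_stdSimplex hm hτ' hS),
    hgap xbar (hX.centerMass_mem_stdSimplex hn hτ' hS)⟩
end
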